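/- arXiv:2306.00321 — 2 statements merged into one kernel-verified Lean document; each statement's English description precedes it below -/
import Mathlib

section
/- Let μ be a policy in a finite MDP whose discounted occupancy has support Ω ⊆ S × S' pairs, and suppose the heuristic satisfies h(s) = V^μ(s) for all states s in the state-support of μ. Let λ(s,s') be arbitrary in [0,1] on Ω and 0 outside Ω. Then the value of μ in the reshaped MDP equals its value in the original MDP: Ṽ^μ(s) = V^μ(s) for every state s in the support of μ. -/
/-!
Averaging over actions turns both Bellman equations into recursions for the Markov chain of `μ`.
On a set closed under this chain the reward terms cancel in `Vtμ - Vμ`, and since `h = Vμ` wherever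
`lam ≠ 0`, what remains is the chain average of `γ (1 - lam) (Vtμ - Vμ)`. Hence `|Vtμ - Vμ|` is
bounded by `γ` times its own average. At a point where it is maximal this gives `M ≤ γ M`, so
`M = 0`.
-/

section WeightedAverage

variable {R ι : Type*} [Fintype ι]

theorem sum_mul_const_add_mul [CommSemiring R] {w : ι → R} (hw_sum : ∑ j, w j = 1)
    (c γ : R) (f : ι → R) :
    ∑ j, w j * (c + γ * f j) = c + γ * ∑ j, w j * f j := by
  simp only [mul_add, Finset.sum_add_distrib, ← Finset.sum_mul, hw_sum, one_mul, Finset.mul_sum,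
    mul_left_comm]

variable [CommRing R] [LinearOrder R] [IsStrictOrderedRing R]

theorem sum_mul_le_of_forall_mem_le {C : Set ι} {w f : ι → R} {M : R}
    (hw_nonneg : ∀ j, 0 ≤ w j) (hw_sum : ∑ j, w j = 1) (hw_supp : ∀ j ∉ C, w j = 0)
    (hf : ∀ j ∈ C, f j ≤ M) : ∑ j, w j * f j ≤ M :=
  calc
    ∑ j, w j * f j ≤ ∑ j, w j * M := by
      refine Finset.sum_le_sum fun j _ => ?_
      by_cases hj : j ∈ C
      · exact mul_le_mul_of_nonneg_left (hf j hj) (hw_nonneg j)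
      · simp [hw_supp j hj]
    _ = M := by rw [← Finset.sum_mul, hw_sum, one_mul]

theorem nonpos_of_le_mul_sum_mul {γ : R} (hγ0 : 0 ≤ γ) (hγ1 : γ < 1)
    {C : Set ι} {w : ι → ι → R} {f : ι → R}
    (hw_nonneg : ∀ i ∈ C, ∀ j, 0 ≤ w i j) (hw_sum : ∀ i ∈ C, ∑ j, w i j = 1)
    (hw_supp : ∀ i ∈ C, ∀ j ∉ C, w i j = 0)
    (hf : ∀ i ∈ C, f i ≤ γ * ∑ j, w i j * f j) : ∀ i ∈ C, f i ≤ 0 := by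
  intro i hi
  obtain ⟨m, hm, hmax⟩ := C.exists_max_image f C.toFinite ⟨i, hi⟩
  have h_average : ∑ j, w m j * f j ≤ f m :=
    sum_mul_le_of_forall_mem_le (hw_nonneg m hm) (hw_sum m hm) (hw_supp m hm) hmax
  have h_contract : f m ≤ γ * f m :=
    (hf m hm).trans (mul_le_mul_of_nonneg_left h_average hγ0)
  have h_gap : (1 - γ) * f m ≤ 0 := by linarith
  exact (hmax i hi).trans (nonpos_of_mul_nonpos_right h_gap (sub_pos.2 hγ1))

theorem abs_sum_mul_blend_le {C : Set ι} {w l e d : ι → R}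
    (hw_nonneg : ∀ j, 0 ≤ w j) (hw_supp : ∀ j ∉ C, w j = 0)
    (hl : ∀ j ∈ C, l j ∈ Set.Icc (0 : R) 1) (he : ∀ j ∈ C, l j ≠ 0 → e j = 0) :
    |∑ j, w j * (l j * e j + (1 - l j) * d j)| ≤ ∑ j, w j * |d j| := by
  refine (Finset.abs_sum_le_sum_abs _ _).trans (Finset.sum_le_sum fun j _ => ?_)
  by_cases hj : j ∈ C
  · obtain ⟨hl0, hl1⟩ := hl j hj
    have hle : l j * e j = 0 := by
      by_cases hlj : l j = 0
      · rw [hlj, zero_mul]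
      · rw [he j hj hlj, mul_zero]
    rw [hle, zero_add, abs_mul, abs_mul, abs_of_nonneg (hw_nonneg j),
      abs_of_nonneg (sub_nonneg.2 hl1)]
    exact mul_le_mul_of_nonneg_left
      (mul_le_of_le_one_left (abs_nonneg _) (sub_le_self 1 hl0)) (hw_nonneg j)
  · simp [hw_supp j hj]

end WeightedAverage

section PolicyTransition

variable {R S A : Type*} [Fintype A]

/-- The one-step transition weights `s → s'` of the Markov chain obtained by running the policy `μ`
in the decision process with transition weights `P`. -/
def policyTransition [Semiring R] (P : S → A → S → R) (μ : S → A → R) (s s' : S) : R :=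
  ∑ a, μ s a * P s a s'

theorem policyTransition_nonneg [Semiring R] [PartialOrder R] [IsOrderedRing R]
    {P : S → A → S → R} {μ : S → A → R} {s : S}
    (hμ : ∀ a, 0 ≤ μ s a) (hP : ∀ a s', 0 ≤ P s a s') (s' : S) :
    0 ≤ policyTransition P μ s s' :=
  Finset.sum_nonneg fun a _ => mul_nonneg (hμ a) (hP a s')

theorem policyTransition_eq_zero [Semiring R] [PartialOrder R]
    {P : S → A → S → R} {μ : S → A → R} {s s' : S}
    (hμ : ∀ a, 0 ≤ μ s a) (hP : ∀ a, 0 ≤ P s a s')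
    (h : ∀ a, 0 < μ s a → ¬ 0 < P s a s') : policyTransition P μ s s' = 0 := by
  refine Finset.sum_eq_zero fun a _ => ?_
  rcases (hμ a).eq_or_lt with hμa | hμa
  · rw [← hμa, zero_mul]
  · rw [← (hP a).eq_of_not_lt (h a hμa), mul_zero]

theorem sum_policyTransition_mul [Semiring R] [Fintype S]
    (P : S → A → S → R) (μ : S → A → R) (f : S → R) (s : S) :
    ∑ s', policyTransition P μ s s' * f s' = ∑ a, μ s a * ∑ s', P s a s' * f s' := by
  simp only [policyTransition, Finset.sum_mul, Finset.mul_sum, mul_assoc]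
  exact Finset.sum_comm

theorem sum_policyTransition [Semiring R] [Fintype S]
    {P : S → A → S → R} {μ : S → A → R} {s : S}
    (hμ : ∑ a, μ s a = 1) (hP : ∀ a, ∑ s', P s a s' = 1) :
    ∑ s', policyTransition P μ s s' = 1 := by
  simpa [hP, hμ] using sum_policyTransition_mul P μ (fun _ => 1) s

theorem sum_policy_mul_reward_add [CommSemiring R] [Fintype S]
    (P : S → A → S → R) (μ r : S → A → R) (γ : R) (f : S → R) (s : S) :
    ∑ a, μ s a * (r s a + γ * ∑ s', P s a s' * f s') =
      ∑ a, μ s a * r s a + γ * ∑ s', policyTransition P μ s s' * f s' := by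
  simp only [sum_policyTransition_mul, mul_add, Finset.sum_add_distrib, Finset.mul_sum,
    mul_left_comm]

end PolicyTransition

section Reshaping

variable {R S A : Type*} [Fintype S] [Fintype A]

theorem reshaped_value_sub_value_eq [CommRing R]
    {P : S → A → S → R} {r : S → A → R} {γ : R} {μ : S → A → R}
    {lam : S → S → R} {h Vμ Vtμ : S → R} {s : S}
    (hP : ∀ a, ∑ s', P s a s' = 1)
    (hVμ : Vμ s = ∑ a, μ s a * (r s a + γ * ∑ s', P s a s' * Vμ s'))
    (hVtμ : Vtμ s = ∑ a, μ s a * ∑ s', P s a s' *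
      (r s a + γ * lam s s' * h s' + γ * (1 - lam s s') * Vtμ s')) :
    Vtμ s - Vμ s = γ * ∑ s', policyTransition P μ s s' *
      (lam s s' * (h s' - Vμ s') + (1 - lam s s') * (Vtμ s' - Vμ s')) := by
  have hVtμ_chain : Vtμ s = ∑ a, μ s a * r s a + γ * ∑ s', policyTransition P μ s s' *
      (lam s s' * h s' + (1 - lam s s') * Vtμ s') := by
    rw [hVtμ, ← sum_policy_mul_reward_add]
    simp only [← sum_mul_const_add_mul (hP _)]
    exact Finset.sum_congr rfl fun a _ => congrArg _ (Finset.sum_congr rfl fun s' _ => by ring)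
  rw [hVtμ_chain, hVμ, sum_policy_mul_reward_add, add_sub_add_left_eq_sub, ← mul_sub,
    ← Finset.sum_sub_distrib]
  congr! 2 with s'
  ring

variable [CommRing R] [LinearOrder R] [IsStrictOrderedRing R]

theorem hubl_behavior_value_invariant_general
    (P : S → A → S → R) (r : S → A → R)
    (γ : R) (hγ0 : 0 ≤ γ) (hγ1 : γ < 1)
    (μ : S → A → R) (hμnn : ∀ s a, 0 ≤ μ s a) (hμsum : ∀ s, ∑ a, μ s a = 1)
    (hPnn : ∀ s a s', 0 ≤ P s a s') (hPsum : ∀ s a, ∑ s', P s a s' = 1)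
    (C : Set S)
    (hclosed : ∀ s ∈ C, ∀ a, 0 < μ s a → ∀ s', 0 < P s a s' → s' ∈ C)
    (lam : S → S → R) (hlam : ∀ s ∈ C, ∀ s' ∈ C, lam s s' ∈ Set.Icc (0 : R) 1)
    (h Vμ Vtμ : S → R)
    (hVμ : ∀ s ∈ C, Vμ s = ∑ a, μ s a * (r s a + γ * ∑ s', P s a s' * Vμ s'))
    (hh : ∀ s ∈ C, ∀ s' ∈ C, lam s s' ≠ 0 → h s' = Vμ s')
    (hVtμ : ∀ s ∈ C, Vtμ s = ∑ a, μ s a * ∑ s', P s a s' *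
      (r s a + γ * lam s s' * h s' + γ * (1 - lam s s') * Vtμ s')) :
    ∀ s ∈ C, Vtμ s = Vμ s := by
  have h_nonneg (s s') : 0 ≤ policyTransition P μ s s' :=
    policyTransition_nonneg (hμnn s) (hPnn s) s'
  have h_supp : ∀ s ∈ C, ∀ s' ∉ C, policyTransition P μ s s' = 0 := fun s hs s' hs' =>
    policyTransition_eq_zero (hμnn s) (hPnn s · s') fun a hμa hPa => hs' (hclosed s hs a hμa s' hPa)
  have h_contract : ∀ s ∈ C,
      |Vtμ s - Vμ s| ≤ γ * ∑ s', policyTransition P μ s s' * |Vtμ s' - Vμ s'| := by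
    intro s hs
    rw [reshaped_value_sub_value_eq (hPsum s) (hVμ s hs) (hVtμ s hs), abs_mul, abs_of_nonneg hγ0]
    exact mul_le_mul_of_nonneg_left (abs_sum_mul_blend_le (h_nonneg s) (h_supp s hs) (hlam s hs)
      fun s' hs' hne => sub_eq_zero.2 (hh s hs s' hs' hne)) hγ0
  intro s hs
  have h_nonpos : |Vtμ s - Vμ s| ≤ 0 :=
    nonpos_of_le_mul_sum_mul hγ0 hγ1 (fun s _ => h_nonneg s)
      (fun s _ => sum_policyTransition (hμsum s) (hPsum s)) h_supp h_contract s hs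
  exact sub_eq_zero.1 (abs_nonpos_iff.1 h_nonpos)

end Reshaping

/-- Lemma `exntend-thm1` of HUBL.  If the heuristic equals the
behavior-policy value `V^μ` on the (state) support `Ω` of `μ`, the blending
function `λ(s,s') ∈ [0,1]` vanishes whenever `s ∉ Ω` or `s' ∉ Ω`, and the
support is closed under transitions of `μ`, then the value `Ṽ^μ` of `μ` in the
reshaped MDP coincides with `V^μ` on `Ω`. -/
theorem hubl_behavior_value_invariant
    {S A : Type*} [Fintype S] [Fintype A]
    (P : S → A → S → ℝ) (r : S → A → ℝ)
    (γ : ℝ) (hγ0 : 0 ≤ γ) (hγ1 : γ < 1)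
    (μ : S → A → ℝ) (hμnn : ∀ s a, 0 ≤ μ s a) (hμsum : ∀ s, ∑ a, μ s a = 1)
    (hPnn : ∀ s a s', 0 ≤ P s a s') (hPsum : ∀ s a, ∑ s', P s a s' = 1)
    (Ω : Set S)
    -- the support is closed under transitions of μ
    (hclosed : ∀ s ∈ Ω, ∀ a, 0 < μ s a → ∀ s', 0 < P s a s' → s' ∈ Ω)
    (lam : S → S → ℝ) (hlam : ∀ s s', lam s s' ∈ Set.Icc (0 : ℝ) 1)
    (hlam0 : ∀ s s', s ∉ Ω ∨ s' ∉ Ω → lam s s' = 0)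
    (h : S → ℝ)
    (Vμ Vtμ : S → ℝ)
    (hVμ : ∀ s, Vμ s = ∑ a, μ s a * (r s a + γ * ∑ s', P s a s' * Vμ s'))
    (hh : ∀ s ∈ Ω, h s = Vμ s)
    (hVtμ : ∀ s, Vtμ s = ∑ a, μ s a * ∑ s', P s a s' *
      (r s a + γ * lam s s' * h s' + γ * (1 - lam s s') * Vtμ s')) :
    ∀ s ∈ Ω, Vtμ s = Vμ s := by
  exact hubl_behavior_value_invariant_general P r γ hγ0 hγ1 μ hμnn hμsum hPnn hPsum Ω hclosed lam
    (fun s _ s' _ => hlam s s') h Vμ Vtμ (fun s _ => hVμ s) (fun _ _ s' hs' _ => hh s' hs')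
    (fun s _ => hVtμ s)
end

section
/- In a finite MDP with constant blending factor λ ∈ [0,1], the gap between the original optimal value and the reshaped value of π* admits the series representation V*(s) − Ṽ^{π*}(s) = E_{trajectories of π* from s}[ Σ_{t=1}^∞ λ (1−λ)^{t−1} γ^t (V*(s_t) − h(s_t)) ]. -/
/-! Write `K` for the transition matrix that `π*` induces on the states. Subtracting the two fixed
point equations cancels the rewards and leaves an affine equation for the gap `D = V* − Ṽ`, namely
`D = γ(1 − λ) K D + γλ K (V* − h)`. As `‖γ(1 − λ) K‖ < 1` for the norm induced by the sup norm, its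
solution is a Neumann series in `K`, and pairing with the initial distribution turns the powers of
`K` into the state distributions of `π*`. -/

open Matrix
open scoped Matrix.Norms.Operator

theorem hasSum_pow_apply_of_eq_apply_add {𝕜 E : Type*} [NontriviallyNormedField 𝕜]
    [NormedAddCommGroup E] [NormedSpace 𝕜 E] [CompleteSpace E] {T : E →L[𝕜] E} (hT : ‖T‖ < 1)
    {x y : E} (hx : x = T x + y) : HasSum (fun t : ℕ => (T ^ t) y) x := by
  have hy : (1 - T) x = y := sub_eq_of_eq_add' hx
  have hlimit : (∑' t : ℕ, T ^ t) y = x := by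
    rw [← hy, ← mul_apply_eq_comp, geom_series_mul_neg T hT, one_apply_eq_self]
  have hseries := (summable_geometric_of_norm_lt_one hT).hasSum.mapL
    (ContinuousLinearMap.apply 𝕜 E y)
  exact hlimit ▸ hseries

theorem hasSum_pow_mulVec_of_eq_mulVec_add {𝕜 n : Type*} [RCLike 𝕜] [Fintype n]
    [DecidableEq n] {M : Matrix n n 𝕜} (hM : ‖M‖ < 1) {v w : n → 𝕜} (hv : v = M *ᵥ v + w) :
    HasSum (fun t : ℕ => M ^ t *ᵥ w) v := by
  rw [linfty_opNorm_eq_opNorm] at hM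
  refine (hasSum_pow_apply_of_eq_apply_add hM hv).congr_fun fun t => ?_
  rw [FunLike.coe_pow_eq_iterate, ← toLin'_apply, toLin'_pow, Module.End.pow_apply]
  rfl

section MarkovChain

variable {S : Type*} [Fintype S] [DecidableEq S]

theorem norm_le_one_of_mem_rowStochastic {K : Matrix S S ℝ} (hK : K ∈ rowStochastic ℝ S) :
    ‖K‖ ≤ 1 := by
  rw [linfty_opNorm_def, ← NNReal.coe_one, NNReal.coe_le_coe]
  refine Finset.sup_le fun x _ => le_of_eq <| NNReal.coe_injective ?_
  push_cast
  simp only [Real.norm_of_nonneg (nonneg_of_mem_rowStochastic hK)]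
  exact sum_row_of_mem_rowStochastic hK x

theorem eq_vecMul_pow_of_forall_succ_eq_vecMul {R : Type*} [Semiring R] {K : Matrix S S R}
    {ρ : ℕ → S → R} (hρ : ∀ t, ρ (t + 1) = ρ t ᵥ* K) (t : ℕ) : ρ t = ρ 0 ᵥ* K ^ t := by
  induction t with
  | zero => rw [pow_zero, vecMul_one]
  | succ t ih => rw [hρ, ih, vecMul_vecMul, pow_succ]

theorem hasSum_discounted_dotProduct {K : Matrix S S ℝ} (hK : K ∈ rowStochastic ℝ S)
    {β : ℝ} (hβ : |β| < 1) {v w : S → ℝ} (hv : v = β • K *ᵥ v + w)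
    {ρ : ℕ → S → ℝ} (hρ : ∀ t, ρ (t + 1) = ρ t ᵥ* K) :
    HasSum (fun t => β ^ t * (ρ t ⬝ᵥ w)) (ρ 0 ⬝ᵥ v) := by
  have hnorm : ‖β • K‖ < 1 :=
    calc ‖β • K‖ = |β| * ‖K‖ := norm_smul β K
      _ ≤ |β| := mul_le_of_le_one_right (abs_nonneg β) (norm_le_one_of_mem_rowStochastic hK)
      _ < 1 := hβ
  have hseries : HasSum (fun t : ℕ => (β • K) ^ t *ᵥ w) v :=
    hasSum_pow_mulVec_of_eq_mulVec_add hnorm (by rwa [smul_mulVec])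
  have hpaired := hseries.map (dotProductBilin ℝ ℝ (ρ 0))
    (continuous_const.dotProduct continuous_id)
  refine hpaired.congr_fun fun t => ?_
  rw [Function.comp_apply, dotProductBilin_apply_apply, smul_pow, smul_mulVec, dotProduct_smul,
    dotProduct_mulVec, ← eq_vecMul_pow_of_forall_succ_eq_vecMul hρ, smul_eq_mul]

end MarkovChain

section InducedTransition

variable {S A : Type*} [Fintype S] [Fintype A]

/-- The transition matrix of the Markov chain on the states obtained by running the stationary
policy `π` in a decision process with transition probabilities `P`. -/
def inducedTransition (P : S → A → S → ℝ) (π : S → A → ℝ) : Matrix S S ℝ :=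
  Matrix.of fun x y => ∑ a, π x a * P x a y

variable {P : S → A → S → ℝ} {π : S → A → ℝ}

theorem inducedTransition_mulVec (f : S → ℝ) (x : S) :
    (inducedTransition P π *ᵥ f) x = ∑ a, π x a * ∑ y, P x a y * f y := by
  simp only [inducedTransition, mulVec, dotProduct, of_apply, Finset.sum_mul, Finset.mul_sum,
    mul_assoc]
  exact Finset.sum_comm

theorem vecMul_inducedTransition (μ : S → ℝ) (y : S) :
    (μ ᵥ* inducedTransition P π) y = ∑ x, ∑ a, μ x * π x a * P x a y := by
  simp only [inducedTransition, vecMul, dotProduct, of_apply, Finset.mul_sum, mul_assoc]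

theorem inducedTransition_mem_rowStochastic [DecidableEq S]
    (hπnn : ∀ s a, 0 ≤ π s a) (hπsum : ∀ s, ∑ a, π s a = 1)
    (hPnn : ∀ s a s', 0 ≤ P s a s') (hPsum : ∀ s a, ∑ s', P s a s' = 1) :
    inducedTransition P π ∈ rowStochastic ℝ S := by
  refine ⟨fun x y => Finset.sum_nonneg fun a _ => mul_nonneg (hπnn x a) (hPnn x a y), ?_⟩
  ext x
  simp [inducedTransition_mulVec, hPsum, hπsum]

theorem value_gap_eq_inducedTransition_mulVec (hPsum : ∀ s a, ∑ s', P s a s' = 1)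
    {r : S → A → ℝ} {γ lam : ℝ} {h V W : S → ℝ}
    (hV : ∀ s, V s = ∑ a, π s a * (r s a + γ * ∑ s', P s a s' * V s'))
    (hW : ∀ s, W s = ∑ a, π s a * ∑ s', P s a s' *
      (r s a + γ * lam * h s' + γ * (1 - lam) * W s')) :
    V - W = (γ * (1 - lam)) • inducedTransition P π *ᵥ (V - W) +
      (γ * lam) • inducedTransition P π *ᵥ (V - h) := by
  let expectedReward : S → ℝ := fun x => ∑ a, π x a * r x a
  have hVvec : V = expectedReward + γ • inducedTransition P π *ᵥ V := by
    ext x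
    simp only [expectedReward, Pi.add_apply, Pi.smul_apply, smul_eq_mul, inducedTransition_mulVec]
    rw [hV]
    simp only [mul_add, Finset.sum_add_distrib, mul_left_comm (π x _), ← Finset.mul_sum]
  have hWvec : W = expectedReward + (γ * lam) • inducedTransition P π *ᵥ h +
      (γ * (1 - lam)) • inducedTransition P π *ᵥ W := by
    ext x
    have hnext (a : A) : ∑ y, P x a y * (r x a + γ * lam * h y + γ * (1 - lam) * W y) =
        r x a + γ * lam * ∑ y, P x a y * h y + γ * (1 - lam) * ∑ y, P x a y * W y := by
      simp only [mul_add, Finset.sum_add_distrib, ← Finset.sum_mul, hPsum, one_mul,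
        mul_left_comm (P x a _), ← Finset.mul_sum]
    simp only [expectedReward, Pi.add_apply, Pi.smul_apply, smul_eq_mul, inducedTransition_mulVec]
    rw [hW]
    simp only [hnext]
    simp only [mul_add, Finset.sum_add_distrib, mul_left_comm (π x _), ← Finset.mul_sum]
  simp only [mulVec_sub]
  linear_combination (norm := module) hVvec - hWvec

end InducedTransition

theorem hubl_value_gap_series_general
    {S A : Type*} [Fintype S] [Fintype A]
    (P : S → A → S → ℝ) (r : S → A → ℝ) (γ lam : ℝ) (hdiscount : |γ * (1 - lam)| < 1)
    (πstar : S → A → ℝ) (hπnn : ∀ s a, 0 ≤ πstar s a)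
    (hπsum : ∀ s, ∑ a, πstar s a = 1)
    (hPnn : ∀ s a s', 0 ≤ P s a s') (hPsum : ∀ s a, ∑ s', P s a s' = 1)
    (h Vstar Vtstar : S → ℝ)
    (hVstar : ∀ s, Vstar s = ∑ a, πstar s a *
      (r s a + γ * ∑ s', P s a s' * Vstar s'))
    (hVtstar : ∀ s, Vtstar s = ∑ a, πstar s a * ∑ s', P s a s' *
      (r s a + γ * lam * h s' + γ * (1 - lam) * Vtstar s'))
    (ρ : ℕ → S → ℝ)
    (hρ : ∀ t s', ρ (t + 1) s' = ∑ s₁, ∑ a, ρ t s₁ * πstar s₁ a * P s₁ a s') :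
    HasSum (fun t => lam * (1 - lam) ^ t * γ ^ (t + 1) *
      ∑ s', ρ (t + 1) s' * (Vstar s' - h s')) (∑ s', ρ 0 s' * (Vstar s' - Vtstar s')) := by
  classical
  have hK := inducedTransition_mem_rowStochastic hπnn hπsum hPnn hPsum
  have hgap := value_gap_eq_inducedTransition_mulVec hPsum hVstar hVtstar
  have hstep (t : ℕ) : ρ (t + 1) = ρ t ᵥ* inducedTransition P πstar :=
    funext fun s' => (hρ t s').trans (vecMul_inducedTransition (ρ t) s').symm
  refine (hasSum_discounted_dotProduct hK hdiscount hgap hstep).congr_fun fun t => ?_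
  change _ * (ρ (t + 1) ⬝ᵥ (Vstar - h)) = _
  rw [hstep, dotProduct_smul, dotProduct_mulVec, smul_eq_mul, mul_pow]
  ring

/-- Lemma `v-star-tv` of HUBL.  With a constant blending factor
`λ ∈ [0,1]`, the gap between the original optimal value and the reshaped value
of `π*` has the series representation
`V*(s) − Ṽ^{π*}(s) = E_{π*, s}[Σ_{t≥1} λ(1−λ)^{t−1} γ^t (V*(s_t) − h(s_t))]`,
where `ρ t` is the time-`t` state distribution of `π*` started at `s`. -/
theorem hubl_value_gap_series
    {S A : Type*} [Fintype S] [Fintype A] [DecidableEq S]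
    (P : S → A → S → ℝ) (r : S → A → ℝ)
    (γ : ℝ) (hγ0 : 0 ≤ γ) (hγ1 : γ < 1)
    (lam : ℝ) (hlam : lam ∈ Set.Icc (0 : ℝ) 1)
    (πstar : S → A → ℝ) (hπnn : ∀ s a, 0 ≤ πstar s a)
    (hπsum : ∀ s, ∑ a, πstar s a = 1)
    (hPnn : ∀ s a s', 0 ≤ P s a s') (hPsum : ∀ s a, ∑ s', P s a s' = 1)
    (h Vstar Vtstar : S → ℝ)
    (hVstar : ∀ s, Vstar s = ∑ a, πstar s a *
      (r s a + γ * ∑ s', P s a s' * Vstar s'))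
    (hVtstar : ∀ s, Vtstar s = ∑ a, πstar s a * ∑ s', P s a s' *
      (r s a + γ * lam * h s' + γ * (1 - lam) * Vtstar s'))
    (s : S) (ρ : ℕ → S → ℝ)
    (hρ0 : ∀ s', ρ 0 s' = if s' = s then 1 else 0)
    (hρ : ∀ t s', ρ (t + 1) s' = ∑ s₁, ∑ a, ρ t s₁ * πstar s₁ a * P s₁ a s') :
    Vstar s - Vtstar s =
      ∑' t : ℕ, lam * (1 - lam) ^ t * γ ^ (t + 1) *
        ∑ s', ρ (t + 1) s' * (Vstar s' - h s') := by
  have hdiscount : |γ * (1 - lam)| < 1 := by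
    rw [abs_of_nonneg (mul_nonneg hγ0 (sub_nonneg.2 hlam.2))]
    exact mul_lt_one_of_nonneg_of_lt_one_left hγ0 hγ1 (sub_le_self 1 hlam.1)
  have hseries := hubl_value_gap_series_general P r γ lam hdiscount πstar hπnn hπsum hPnn hPsum h
    Vstar Vtstar hVstar hVtstar ρ hρ
  simpa [hρ0] using hseries.tsum_eq.symm
end
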